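/- Let ι be a finite nonempty index type, p : ι → ℝ a probability weight function (p i ≥ 0 for all i and ∑ i, p i = 1), d ≥ 1, w φ : ι → (Fin d → ℝ), and λ > 0. Suppose |⟨w i, φ i⟩| ≤ 2 for all i. Let Σ = ∑ j, p j • (outer product of φ j with itself) and K = trace((Σ + λ·I)⁻¹ * Σ). Then ∑ i, p i * ⟨w i, φ i⟩² ≤ 2·sqrt(K * ∑ i, ∑ j, p i * p j * ⟨w i, φ j⟩²) + 2·sqrt(λ * K * ∑ i, p i * ‖w i‖²). -/

import Mathlib

/-!
For a positive definite matrix `M`, Cauchy–Schwarz in the inner product of `M` gives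
`⟨w i, φ i⟩² ≤ ⟨w i, M (w i)⟩ * ⟨φ i, M⁻¹ (φ i)⟩`. The right-hand side decouples `w` from `φ`: by
Cauchy–Schwarz over `i`, the mean of `|⟨w i, φ i⟩|` is at most the square root of the product of
the means of the two factors. The mean of the second factor is `trace (M⁻¹ * S)`, with `S` the
second moment of `φ`. At `M = S + R` this is the effective dimension, while the mean of the first
factor is the decoupled double expectation plus the mean of `⟨w i, R (w i)⟩`. A uniform bound
`|⟨w i, φ i⟩| ≤ C` passes from the mean absolute value to the mean square.
-/

section LinearDecoupling

open Matrix

variable {ι n : Type*} [Fintype ι] {p : ι → ℝ}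

/-- The (uncentred) second-moment matrix `E_{j ∼ p} φ j (φ j)ᵀ` of the vectors `φ j` under the
weights `p`, which need not sum to `1`. -/
def secondMoment (p : ι → ℝ) (φ : ι → n → ℝ) : Matrix n n ℝ :=
  ∑ j, p j • vecMulVec (φ j) (φ j)

theorem posSemidef_secondMoment [Finite n] (hp : ∀ i, 0 ≤ p i) (φ : ι → n → ℝ) :
    (secondMoment p φ).PosSemidef :=
  posSemidef_sum _ fun j _ => (posSemidef_vecMulVec_self_star (φ j)).smul (hp j)

variable [Fintype n]

theorem sq_dotProduct_mulVec_le_of_posSemidef {M : Matrix n n ℝ} (hM : M.PosSemidef)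
    (x y : n → ℝ) : (x ⬝ᵥ M *ᵥ y) ^ 2 ≤ (x ⬝ᵥ M *ᵥ x) * (y ⬝ᵥ M *ᵥ y) := by
  classical
  have hsymm : LinearMap.IsSymm (toBilin' M) :=
    ⟨fun u v => by
      rw [RingHom.id_apply, toBilin'_apply', toBilin'_apply', dotProduct_mulVec,
        ← mulVec_transpose, ← conjTranspose_eq_transpose_of_trivial, hM.isHermitian.eq,
        dotProduct_comm]⟩
  have hnonneg (u : n → ℝ) : 0 ≤ toBilin' M u u := by
    simpa only [toBilin'_apply', star_trivial] using hM.dotProduct_mulVec_nonneg u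
  simpa only [toBilin'_apply'] using (toBilin' M).apply_sq_le_of_symm hnonneg hsymm x y

theorem sq_dotProduct_le_of_posDef [DecidableEq n] {M : Matrix n n ℝ} (hM : M.PosDef)
    (x y : n → ℝ) : (x ⬝ᵥ y) ^ 2 ≤ (x ⬝ᵥ M *ᵥ x) * (y ⬝ᵥ M⁻¹ *ᵥ y) := by
  have hinv : M *ᵥ (M⁻¹ *ᵥ y) = y := by
    rw [mulVec_mulVec, mul_nonsing_inv _ ((isUnit_iff_isUnit_det M).1 hM.isUnit), one_mulVec]
  simpa only [hinv, dotProduct_comm (M⁻¹ *ᵥ y) y] using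
    sq_dotProduct_mulVec_le_of_posSemidef hM.posSemidef x (M⁻¹ *ᵥ y)

/-- The effective dimension of the second-moment matrix `S` at the regularizer `R`; ridge
regularization of strength `lam` is `R = lam • 1`. -/
noncomputable def effectiveDim [DecidableEq n] (S R : Matrix n n ℝ) : ℝ :=
  trace ((S + R)⁻¹ * S)

theorem trace_mul_secondMoment (A : Matrix n n ℝ) (p : ι → ℝ) (φ : ι → n → ℝ) :
    trace (A * secondMoment p φ) = ∑ j, p j * (φ j ⬝ᵥ A *ᵥ φ j) := by
  simp only [secondMoment, Matrix.mul_sum, trace_sum, mul_smul_comm, trace_smul, mul_vecMulVec,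
    trace_vecMulVec, smul_eq_mul, dotProduct_comm (A *ᵥ _)]

theorem dotProduct_secondMoment_mulVec (p : ι → ℝ) (φ : ι → n → ℝ) (x : n → ℝ) :
    x ⬝ᵥ secondMoment p φ *ᵥ x = ∑ j, p j * (x ⬝ᵥ φ j) ^ 2 := by
  simp only [secondMoment, sum_mulVec, dotProduct_sum, smul_mulVec, vecMulVec_mulVec,
    dotProduct_smul, op_smul_eq_smul, smul_eq_mul, dotProduct_comm _ x, sq]

theorem trace_mul_secondMoment_nonneg (hp : ∀ i, 0 ≤ p i) {A : Matrix n n ℝ} (hA : A.PosSemidef)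
    (φ : ι → n → ℝ) : 0 ≤ trace (A * secondMoment p φ) := by
  rw [trace_mul_secondMoment]
  exact Finset.sum_nonneg fun j _ => mul_nonneg (hp j) (hA.dotProduct_mulVec_nonneg (φ j))

theorem sum_mul_dotProduct_secondMoment_add_mulVec (p : ι → ℝ) (w φ : ι → n → ℝ)
    (R : Matrix n n ℝ) :
    ∑ i, p i * (w i ⬝ᵥ (secondMoment p φ + R) *ᵥ w i) =
      ∑ i, ∑ j, p i * p j * (w i ⬝ᵥ φ j) ^ 2 + ∑ i, p i * (w i ⬝ᵥ R *ᵥ w i) := by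
  simp only [add_mulVec, dotProduct_add, dotProduct_secondMoment_mulVec, mul_add,
    Finset.sum_add_distrib, Finset.mul_sum, mul_assoc]

theorem sq_sum_mul_abs_dotProduct_le [DecidableEq n] (hp : ∀ i, 0 ≤ p i) {M : Matrix n n ℝ}
    (hM : M.PosDef) (w φ : ι → n → ℝ) :
    (∑ i, p i * |w i ⬝ᵥ φ i|) ^ 2 ≤
      trace (M⁻¹ * secondMoment p φ) * ∑ i, p i * (w i ⬝ᵥ M *ᵥ w i) := by
  rw [trace_mul_secondMoment]
  refine Finset.sum_sq_le_sum_mul_sum_of_sq_le_mul _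
    (fun i _ => mul_nonneg (hp i) (hM.inv.posSemidef.dotProduct_mulVec_nonneg (φ i)))
    (fun i _ => mul_nonneg (hp i) (hM.posSemidef.dotProduct_mulVec_nonneg (w i))) fun i _ => ?_
  calc (p i * |w i ⬝ᵥ φ i|) ^ 2 = p i ^ 2 * (w i ⬝ᵥ φ i) ^ 2 := by rw [mul_pow, sq_abs]
    _ ≤ p i ^ 2 * ((w i ⬝ᵥ M *ᵥ w i) * (φ i ⬝ᵥ M⁻¹ *ᵥ φ i)) := by
      gcongr
      exact sq_dotProduct_le_of_posDef hM (w i) (φ i)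
    _ = p i * (φ i ⬝ᵥ M⁻¹ *ᵥ φ i) * (p i * (w i ⬝ᵥ M *ᵥ w i)) := by ring

theorem sum_mul_abs_dotProduct_le_sqrt_add_sqrt [DecidableEq n] (hp : ∀ i, 0 ≤ p i)
    (w φ : ι → n → ℝ) {R : Matrix n n ℝ} (hR : R.PosDef) :
    ∑ i, p i * |w i ⬝ᵥ φ i| ≤
      √(effectiveDim (secondMoment p φ) R * ∑ i, ∑ j, p i * p j * (w i ⬝ᵥ φ j) ^ 2) +
        √(effectiveDim (secondMoment p φ) R * ∑ i, p i * (w i ⬝ᵥ R *ᵥ w i)) := by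
  have hM : (secondMoment p φ + R).PosDef :=
    PosDef.posSemidef_add (posSemidef_secondMoment hp φ) hR
  have hK : 0 ≤ effectiveDim (secondMoment p φ) R :=
    trace_mul_secondMoment_nonneg hp hM.inv.posSemidef φ
  have hdecoupled : 0 ≤ ∑ i, ∑ j, p i * p j * (w i ⬝ᵥ φ j) ^ 2 :=
    Finset.sum_nonneg fun i _ => Finset.sum_nonneg fun j _ =>
      mul_nonneg (mul_nonneg (hp i) (hp j)) (sq_nonneg _)
  have hpenalty : 0 ≤ ∑ i, p i * (w i ⬝ᵥ R *ᵥ w i) :=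
    Finset.sum_nonneg fun i _ =>
      mul_nonneg (hp i) (hR.posSemidef.dotProduct_mulVec_nonneg (w i))
  have hsq := sq_sum_mul_abs_dotProduct_le hp hM w φ
  rw [sum_mul_dotProduct_secondMoment_add_mulVec, mul_add, ← effectiveDim] at hsq
  refine (Real.le_sqrt_of_sq_le hsq).trans ?_
  simpa only [Real.sqrt_eq_rpow] using
    Real.rpow_add_le_add_rpow (mul_nonneg hK hdecoupled) (mul_nonneg hK hpenalty)
      one_half_pos.le one_half_lt_one.le

theorem sum_mul_sq_le_mul_sum_mul_abs (hp : ∀ i, 0 ≤ p i) {x : ι → ℝ} {C : ℝ}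
    (hx : ∀ i, |x i| ≤ C) : ∑ i, p i * x i ^ 2 ≤ C * ∑ i, p i * |x i| := by
  rw [Finset.mul_sum]
  refine Finset.sum_le_sum fun i _ => ?_
  calc p i * x i ^ 2 = |x i| * (p i * |x i|) := by rw [← sq_abs]; ring
    _ ≤ C * (p i * |x i|) := mul_le_mul_of_nonneg_right (hx i) (mul_nonneg (hp i) (abs_nonneg _))

theorem dotProduct_smul_one_mulVec [DecidableEq n] (c : ℝ) (x : n → ℝ) :
    x ⬝ᵥ (c • (1 : Matrix n n ℝ)) *ᵥ x = c * ∑ k, x k ^ 2 := by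
  rw [smul_mulVec, one_mulVec, dotProduct_smul, smul_eq_mul]
  simp only [dotProduct, sq]

theorem stmt_9_general [DecidableEq n] (hp : ∀ i, 0 ≤ p i) (w φ : ι → n → ℝ)
    {R : Matrix n n ℝ} (hR : R.PosDef) {C : ℝ} (hC : ∀ i, |w i ⬝ᵥ φ i| ≤ C) :
    ∑ i, p i * (w i ⬝ᵥ φ i) ^ 2 ≤
      C * √(effectiveDim (secondMoment p φ) R * ∑ i, ∑ j, p i * p j * (w i ⬝ᵥ φ j) ^ 2) +
        C * √(effectiveDim (secondMoment p φ) R * ∑ i, p i * (w i ⬝ᵥ R *ᵥ w i)) := by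
  rcases isEmpty_or_nonempty ι with _ | ⟨⟨i⟩⟩
  · simp
  have hC0 : 0 ≤ C := (abs_nonneg _).trans (hC i)
  rw [← mul_add]
  exact (sum_mul_sq_le_mul_sum_mul_abs hp hC).trans
    (mul_le_mul_of_nonneg_left (sum_mul_abs_dotProduct_le_sqrt_add_sqrt hp w φ hR) hC0)

end LinearDecoupling

/-- finite-dimensional content of Lemma E.2 (Linear Embedding Decoupling). -/
theorem stmt_9 {ι : Type*} [Fintype ι] [Nonempty ι]
    (p : ι → ℝ) (hp0 : ∀ i, 0 ≤ p i) (hp1 : ∑ i, p i = 1)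
    (d : ℕ) (hd : 1 ≤ d) (w φ : ι → Fin d → ℝ) (lam : ℝ) (hlam : 0 < lam)
    (hbd : ∀ i, |∑ k, w i k * φ i k| ≤ 2)
    (S : Matrix (Fin d) (Fin d) ℝ)
    (hS : S = ∑ j, p j • Matrix.vecMulVec (φ j) (φ j))
    (K : ℝ)
    (hK : K = Matrix.trace ((S + lam • (1 : Matrix (Fin d) (Fin d) ℝ))⁻¹ * S)) :
    ∑ i, p i * (∑ k, w i k * φ i k) ^ 2 ≤
      2 * Real.sqrt (K * ∑ i, ∑ j, p i * p j * (∑ k, w i k * φ j k) ^ 2) +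
        2 * Real.sqrt (lam * K * ∑ i, p i * ∑ k, w i k ^ 2) := by
  subst hS hK
  rw [mul_assoc lam, mul_left_comm lam]
  simpa only [dotProduct_smul_one_mulVec, mul_left_comm _ lam, ← Finset.mul_sum] using!
    stmt_9_general hp0 w φ (Matrix.PosDef.one.smul hlam) hbd
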